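/- Assume the Goldberg–Seymour conjecture holds, i.e., every finite loopless multigraph H satisfies χ'(H) ≤ max{Δ(H)+1, ⌈Γ(H)⌉}. Let G=(V,E) be a finite loopless multigraph, let Z ⊆ V, let k be a positive integer, and let ε ∈ {0,1}. If every vertex z ∈ Z has degree d(z) ≥ k+1 and |E⁺(U)| ≥ ((|U|+1)/2)·k + ε for every odd set U ⊆ Z, then G contains k−1+ε pairwise disjoint Z-covers. -/

import Mathlib

open Finset

variable {V E : Type} [Fintype V] [DecidableEq V] [Fintype E]

/-- A multigraph given by an incidence map `ends : E → Sym2 V` is loopless if no edge is a loop. -/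
def Loopless (ends : E → Sym2 V) : Prop := ∀ e : E, ¬ (ends e).IsDiag

/-- The degree of a vertex: the number of edges incident with it. -/
def mDegree (ends : E → Sym2 V) (v : V) : ℕ :=
  (univ.filter fun e => v ∈ ends e).card

/-- The minimum degree δ(G). -/
noncomputable def minDegree (ends : E → Sym2 V) : ℕ :=
  sInf (Set.range (mDegree ends))

/-- The maximum degree Δ(G). -/
noncomputable def maxDegree (ends : E → Sym2 V) : ℕ :=
  sSup (Set.range (mDegree ends))

/-- The maximum multiplicity μ(G) of an edge. -/
noncomputable def maxMultiplicity (ends : E → Sym2 V) : ℕ :=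
  sSup (Set.range fun e : E => (univ.filter fun f : E => ends f = ends e).card)

/-- `E(U)`: the set of edges with both ends in `U`. -/
def edgesIn (ends : E → Sym2 V) (U : Finset V) : Finset E :=
  univ.filter fun e => ∀ v ∈ ends e, v ∈ U

/-- `E⁺(U)`: the set of edges with at least one end in `U`. -/
def edgesPlus (ends : E → Sym2 V) (U : Finset V) : Finset E :=
  univ.filter fun e => ∃ v ∈ ends e, v ∈ U

/-- `F(U)`: the set of edges with exactly one end in `U`. -/
def edgesF (ends : E → Sym2 V) (U : Finset V) : Finset E :=
  univ.filter fun e => (∃ v ∈ ends e, v ∈ U) ∧ ¬ ∀ v ∈ ends e, v ∈ U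

/-- `E(X,Y)`: the set of edges with one end in `X` and the other end in `Y`. -/
def edgesBetween (ends : E → Sym2 V) (X Y : Finset V) : Finset E :=
  univ.filter fun e => ∃ x ∈ X, ∃ y ∈ Y, ends e = s(x, y)

/-- An odd set: a vertex set of odd size at least 3. -/
def IsOddSet (U : Finset V) : Prop := 3 ≤ U.card ∧ Odd U.card

/-- A proper edge coloring: each vertex is incident with at most one edge of each color. -/
def IsProperEdgeColoring (ends : E → Sym2 V) {k : ℕ} (c : E → Fin k) : Prop :=
  ∀ v : V, ∀ e f : E, v ∈ ends e → v ∈ ends f → c e = c f → e = f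

/-- The chromatic index χ'(G). -/
noncomputable def chromaticIndex (ends : E → Sym2 V) : ℕ :=
  sInf {k : ℕ | ∃ c : E → Fin k, IsProperEdgeColoring ends c}

/-- A cover coloring: each vertex is incident with at least one edge of each color. -/
def IsCoverColoring (ends : E → Sym2 V) {k : ℕ} (c : E → Fin k) : Prop :=
  ∀ (v : V) (i : Fin k), ∃ e : E, v ∈ ends e ∧ c e = i

/-- The cover index ξ(G). -/
noncomputable def coverIndex (ends : E → Sym2 V) : ℕ :=
  sSup {k : ℕ | ∃ c : E → Fin k, IsCoverColoring ends c}

/-- The density Γ(G) = max over odd sets U of 2|E(U)|/(|U|-1). -/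
noncomputable def density (ends : E → Sym2 V) : ℝ :=
  sSup {x : ℝ | ∃ U : Finset V, IsOddSet U ∧
    x = 2 * (edgesIn ends U).card / ((U.card : ℝ) - 1)}

/-- The co-density Φ(G) = min over odd sets U of 2|E⁺(U)|/(|U|+1). -/
noncomputable def codensity (ends : E → Sym2 V) : ℝ :=
  sInf {x : ℝ | ∃ U : Finset V, IsOddSet U ∧
    x = 2 * (edgesPlus ends U).card / ((U.card : ℝ) + 1)}

/-!
Replace every edge by the set of its ends in `Z`. This gives a hypergraph on `Z` with edges of size
at most two, and it suffices to color it with `k` colors so that each vertex sees every color, where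
`k` is such that each set of odd size `2 m + 1` meets at least `(m + 1) k + 1` edges. Shrink edges
as long as this condition survives. An uncrossing argument on the tight sets shows that all degrees
are then exactly `k + 1`. In a regular hypergraph the condition on edges meeting an odd set bounds
the density of the multigraph of edges of size two by `k + 2`, so Goldberg–Seymour colors that
multigraph properly with `k + 2` colors. Discarding two of the colors frees at most two edges of
size two at each vertex; these edges and the singletons can be recolored, by Hall's theorem, to
supply the colors missing at the vertices.
-/

section Hypergraph

variable {W F : Type*} [DecidableEq W] [Fintype F] {D : F → Finset W} {k : ℕ}

/-- The edges of a hypergraph that meet `U`. A hypergraph is encoded as a family `D : F → Finset W`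
of vertex sets, so that parallel edges are allowed; it generalizes `edgesPlus`. -/
def edgesMeeting (D : F → Finset W) (U : Finset W) : Finset F :=
  {e | ∃ v ∈ D e, v ∈ U}

/-- The edges of a hypergraph that are incident with `v`; their number is the degree of `v`. -/
def edgesAt (D : F → Finset W) (v : W) : Finset F :=
  {e | v ∈ D e}

@[simp]
lemma mem_edgesMeeting {U : Finset W} {e : F} : e ∈ edgesMeeting D U ↔ ∃ v ∈ D e, v ∈ U := by
  simp [edgesMeeting]

@[simp]
lemma mem_edgesAt {v : W} {e : F} : e ∈ edgesAt D v ↔ v ∈ D e := by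
  simp [edgesAt]

lemma edgesMeeting_singleton (D : F → Finset W) (v : W) : edgesMeeting D {v} = edgesAt D v := by
  ext; simp

lemma edgesMeeting_mono {A B : Finset W} (h : A ⊆ B) : edgesMeeting D A ⊆ edgesMeeting D B := by
  intro e
  simp only [mem_edgesMeeting]
  exact fun ⟨v, hvD, hvA⟩ ↦ ⟨v, hvD, h hvA⟩

lemma sum_card_edgesAt (D : F → Finset W) (U : Finset W) :
    ∑ v ∈ U, #(edgesAt D v) = ∑ e, #(D e ∩ U) := by
  simp only [inter_comm _ U, ← filter_mem_eq_inter]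
  exact sum_card_bipartiteAbove_eq_sum_card_bipartiteBelow (fun v e ↦ v ∈ D e)

lemma card_edgesMeeting_union_add_inter_le (D : F → Finset W) (A B : Finset W) :
    #(edgesMeeting D (A ∪ B)) + #(edgesMeeting D (A ∩ B)) ≤
      #(edgesMeeting D A) + #(edgesMeeting D B) := by
  classical
  rw [← card_union_add_card_inter (edgesMeeting D A)]
  refine add_le_add (card_le_card fun e ↦ ?_) (card_le_card ?_)
  · simp only [mem_union, mem_edgesMeeting]
    grind
  · exact subset_inter (edgesMeeting_mono inter_subset_left) (edgesMeeting_mono inter_subset_right)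

lemma card_edgesMeeting_sdiff_add_le (hD : ∀ e, #(D e) ≤ 2) (A B : Finset W) :
    #(edgesMeeting D (A \ B)) + #(edgesMeeting D (B \ A)) + ∑ v ∈ A ∩ B, #(edgesAt D v) ≤
      #(edgesMeeting D A) + #(edgesMeeting D B) := by
  simp only [sum_card_edgesAt, edgesMeeting, card_filter, ← sum_add_distrib]
  refine sum_le_sum fun e _ ↦ ?_
  have meets_le_card (U : Finset W) : (if ∃ v ∈ D e, v ∈ U then 1 else 0) ≤ #(D e ∩ U) := by
    split_ifs with h
    · obtain ⟨v, hvD, hvU⟩ := h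
      exact card_pos.2 ⟨v, mem_inter.2 ⟨hvD, hvU⟩⟩
    · exact zero_le
  have meets_mono {U U' : Finset W} (hU : U ⊆ U') :
      (if ∃ v ∈ D e, v ∈ U then 1 else 0) ≤ if ∃ v ∈ D e, v ∈ U' then 1 else 0 := by
    split_ifs <;> grind
  obtain hI | ⟨x, hx⟩ := (D e ∩ (A ∩ B)).eq_empty_or_nonempty
  · rw [hI, card_empty]
    linarith [meets_mono (sdiff_subset : A \ B ⊆ A), meets_mono (sdiff_subset : B \ A ⊆ B)]
  · have hparts : #(D e ∩ (A \ B)) + #(D e ∩ (B \ A)) + #(D e ∩ (A ∩ B)) ≤ #(D e) := by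
      rw [← card_union_of_disjoint (by rw [disjoint_left]; grind),
        ← card_union_of_disjoint (by rw [disjoint_left]; grind)]
      exact card_le_card (by grind)
    have hA : ∃ v ∈ D e, v ∈ A := ⟨x, by grind⟩
    have hB : ∃ v ∈ D e, v ∈ B := ⟨x, by grind⟩
    rw [if_pos hA, if_pos hB]
    linarith [hD e, meets_le_card (A \ B), meets_le_card (B \ A)]

/-- The condition `|E⁺(U)| ≥ ((|U| + 1) / 2) k + 1` for vertex sets `U` of odd size `2 m + 1`.
Singletons are included, so all degrees are at least `k + 1`. -/
def IsCodense (D : F → Finset W) (k : ℕ) : Prop :=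
  ∀ ⦃U : Finset W⦄ ⦃m : ℕ⦄, #U = 2 * m + 1 → (m + 1) * k + 1 ≤ #(edgesMeeting D U)

/-- `U` is an odd set attaining equality in `IsCodense`. -/
def IsTight (D : F → Finset W) (k : ℕ) (U : Finset W) : Prop :=
  ∃ m, #U = 2 * m + 1 ∧ #(edgesMeeting D U) = (m + 1) * k + 1

lemma IsCodense.lt_card_edgesAt (h : IsCodense D k) (v : W) : k < #(edgesAt D v) := by
  simpa [edgesMeeting_singleton] using h (m := 0) (card_singleton v)

lemma IsCodense.odd_card_inter_of_isTight (h : IsCodense D k) (hD : ∀ e, #(D e) ≤ 2)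
    {A B : Finset W} (hA : IsTight D k A) (hB : IsTight D k B) (hAB : (A ∩ B).Nonempty) :
    Odd #(A ∩ B) := by
  by_contra! hI
  obtain ⟨i, hi⟩ := Nat.not_odd_iff_even.1 hI
  obtain ⟨a, ha, tA⟩ := hA
  obtain ⟨b, hb, tB⟩ := hB
  have hi_pos : 0 < i := by have := hAB.card_pos; omega
  have cardA := card_sdiff_add_card_inter A B
  have cardB := card_sdiff_add_card_inter B A
  rw [inter_comm] at cardB
  obtain ⟨x, rfl⟩ : ∃ x, a = x + i := ⟨a - i, by omega⟩
  obtain ⟨y, rfl⟩ : ∃ y, b = y + i := ⟨b - i, by omega⟩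
  have hX := h (U := A \ B) (m := x) (by omega)
  have hY := h (U := B \ A) (m := y) (by omega)
  have hdeg : #(A ∩ B) * (k + 1) ≤ ∑ v ∈ A ∩ B, #(edgesAt D v) :=
    card_nsmul_le_sum (A ∩ B) (fun v ↦ #(edgesAt D v)) _ fun v _ ↦ h.lt_card_edgesAt v
  have hle := card_edgesMeeting_sdiff_add_le hD A B
  rw [tA, tB] at hle
  rw [hi] at hdeg
  nlinarith

lemma IsTight.inter (h : IsCodense D k) (hD : ∀ e, #(D e) ≤ 2) {A B : Finset W}
    (hA : IsTight D k A) (hB : IsTight D k B) (hAB : (A ∩ B).Nonempty) :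
    IsTight D k (A ∩ B) := by
  obtain ⟨i, hi⟩ := h.odd_card_inter_of_isTight hD hA hB hAB
  obtain ⟨a, ha, tA⟩ := hA
  obtain ⟨b, hb, tB⟩ := hB
  have cardU := card_union_add_card_inter A B
  obtain ⟨u, hu⟩ : ∃ u, u + i = a + b := ⟨a + b - i, by omega⟩
  have hU := h (U := A ∪ B) (m := u) (by omega)
  refine ⟨i, hi, (h hi).antisymm' ?_⟩
  have hle := card_edgesMeeting_union_add_inter_le D A B
  have hk : u * k + i * k = a * k + b * k := by rw [← add_mul, hu, add_mul]
  linarith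

lemma IsTight.exists_mem_edgesAt (h : IsCodense D k) {T : Finset W} (hT : IsTight D k T) {z : W}
    (hzT : z ∈ T) (hz : k + 1 < #(edgesAt D z)) : ∃ e ∈ edgesAt D z, ∃ v ∈ D e, v ∈ T.erase z := by
  classical
  by_contra! hno
  obtain ⟨m, hm, tT⟩ := hT
  have hdisj : Disjoint (edgesMeeting D (T.erase z)) (edgesAt D z) := by
    rw [disjoint_right]
    simpa using hno
  have hle : #(edgesMeeting D (T.erase z)) + #(edgesAt D z) ≤ #(edgesMeeting D T) := by
    rw [← card_union_of_disjoint hdisj, ← edgesMeeting_singleton]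
    exact card_le_card (union_subset (edgesMeeting_mono (erase_subset z T))
      (edgesMeeting_mono (singleton_subset_iff.2 hzT)))
  have hcard : #(T.erase z) = 2 * m := by rw [card_erase_of_mem hzT, hm, Nat.add_sub_cancel]
  cases m with
  | zero => linarith
  | succ j =>
    obtain ⟨w, hw⟩ : (T.erase z).Nonempty := card_pos.1 (by omega)
    have hdense := h (U := (T.erase z).erase w) (m := j) (by rw [card_erase_of_mem hw]; omega)
    have hmono := card_le_card (edgesMeeting_mono (D := D) (erase_subset w (T.erase z)))
    linarith

/-- Tight sets through `z` are closed under intersection, so an edge from `z` into the smallest one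
serves them all. -/
lemma IsCodense.exists_mem_edgesAt (h : IsCodense D k) (hD : ∀ e, #(D e) ≤ 2) {z : W}
    (hz : k + 1 < #(edgesAt D z)) :
    ∃ e ∈ edgesAt D z, ∀ U, z ∈ U → IsTight D k U → ∃ v ∈ D e, v ∈ U.erase z := by
  by_cases hex : ∃ U, z ∈ U ∧ IsTight D k U
  · obtain ⟨T, ⟨hzT, hT⟩, hmin⟩ := exists_minimal_of_wellFoundedLT _ hex
    obtain ⟨e, he, v, hve, hvT⟩ := hT.exists_mem_edgesAt h hzT hz
    refine ⟨e, he, fun U hzU hU ↦ ⟨v, hve, erase_subset_erase z ?_ hvT⟩⟩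
    have hz_inter : z ∈ T ∩ U := mem_inter.2 ⟨hzT, hzU⟩
    exact (hmin ⟨hz_inter, hT.inter h hD hU ⟨z, hz_inter⟩⟩ inter_subset_left).trans
      inter_subset_right
  · obtain ⟨e, he⟩ : (edgesAt D z).Nonempty := card_pos.1 (by omega)
    exact ⟨e, he, fun U hzU hU ↦ (hex ⟨U, hzU, hU⟩).elim⟩

lemma IsCodense.update_erase [DecidableEq F] (h : IsCodense D k) {e : F} {z : W}
    (he : ∀ U, z ∈ U → IsTight D k U → ∃ v ∈ D e, v ∈ U.erase z) :
    IsCodense (Function.update D e ((D e).erase z)) k := by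
  set D' := Function.update D e ((D e).erase z)
  have mem_of_ne {U : Finset W} {f : F} (hf : f ∈ edgesMeeting D U) (hfe : f ≠ e) :
      f ∈ edgesMeeting D' U := by
    simpa [D', hfe] using hf
  intro U m hm
  by_cases hU : z ∈ U ∧ #(edgesMeeting D U) ≠ (m + 1) * k + 1
  · have hsub : (edgesMeeting D U).erase e ⊆ edgesMeeting D' U := fun f hf ↦
      mem_of_ne (mem_of_mem_erase hf) (ne_of_mem_erase hf)
    have hlt := (h hm).lt_of_ne' hU.2
    have hpred := pred_card_le_card_erase (s := edgesMeeting D U) (a := e)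
    have hle := card_le_card hsub
    omega
  · refine (h hm).trans (card_le_card fun f hf ↦ ?_)
    obtain rfl | hfe := eq_or_ne f e
    · suffices ∃ v ∈ D f, v ∈ U ∧ v ≠ z by
        obtain ⟨v, hv, hvU, hvz⟩ := this
        simpa [D'] using ⟨v, ⟨hvz, hv⟩, hvU⟩
      by_cases hzU : z ∈ U
      · obtain ⟨v, hv, hvU⟩ := he U hzU ⟨m, hm, by tauto⟩
        exact ⟨v, hv, mem_of_mem_erase hvU, ne_of_mem_erase hvU⟩
      · obtain ⟨v, hv, hvU⟩ := mem_edgesMeeting.1 hf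
        exact ⟨v, hv, hvU, ne_of_mem_of_not_mem hvU hzU⟩
    · exact mem_of_ne hf hfe

lemma card_edgesAt_of_minimal_isCodense (hD : ∀ e, #(D e) ≤ 2)
    (h : Minimal (fun D' : F → Finset W ↦ IsCodense D' k) D) (v : W) :
    #(edgesAt D v) = k + 1 := by
  classical
  refine le_antisymm (not_lt.1 fun hv ↦ ?_) (h.prop.lt_card_edgesAt v)
  obtain ⟨e, hve, he⟩ := h.prop.exists_mem_edgesAt hD hv
  have hle := h.le_of_le (h.prop.update_erase he)
    (update_le_self_iff.2 (erase_subset v (D e))) e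
  rw [Function.update_self] at hle
  exact notMem_erase v (D e) (hle (mem_edgesAt.1 hve))

lemma exists_injective_of_weight {α β ι : Type*} [Fintype α] [DecidableEq β]
    (demand : α → Finset ι) (supply : α → Finset β) (w : α → β → ℕ) {n : ℕ} (hn : 0 < n)
    (hdemand : ∀ a, n * #(demand a) ≤ ∑ b ∈ supply a, w a b)
    (hcapacity : ∀ b, ∑ a with b ∈ supply a, w a b ≤ n) :
    ∃ φ : (Σ a, demand a) → β, Function.Injective φ ∧ ∀ p, φ p ∈ supply p.1 := by
  classical
  refine (all_card_le_biUnion_card_iff_exists_injective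
    fun p : Σ a, demand a ↦ supply p.1).1 fun S ↦ ?_
  set T := S.image Sigma.fst
  have hS : #S ≤ ∑ a ∈ T, #(demand a) := by
    calc #S ≤ #(T.sigma fun a ↦ (univ : Finset (demand a))) :=
          card_le_card fun p hp ↦ mem_sigma.2 ⟨mem_image_of_mem _ hp, mem_univ _⟩
      _ = ∑ a ∈ T, #(demand a) := by simp
  refine Nat.le_of_mul_le_mul_left ?_ hn
  calc n * #S ≤ ∑ a ∈ T, n * #(demand a) := by
        rw [← mul_sum]; exact Nat.mul_le_mul_left n hS
    _ ≤ ∑ a ∈ T, ∑ b ∈ supply a, w a b := sum_le_sum fun a _ ↦ hdemand a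
    _ = ∑ b ∈ T.biUnion supply, ∑ a ∈ T with b ∈ supply a, w a b :=
        sum_comm' fun a b ↦ by simp only [mem_biUnion, mem_filter]; tauto
    _ ≤ ∑ _b ∈ T.biUnion supply, n := sum_le_sum fun _ _ ↦
        (sum_le_sum_of_subset (filter_subset_filter _ (subset_univ T))).trans (hcapacity _)
    _ = n * #(S.biUnion fun p ↦ supply p.1) := by
        rw [sum_const, smul_eq_mul, mul_comm, image_biUnion]

/-- The colors below `k` that occur on no edge at `v`. -/
def missingColors (D : F → Finset W) (c : F → ℕ) (k : ℕ) (v : W) : Finset ℕ :=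
  range k \ (edgesAt D v).image c

/-- The edges at `v` whose color is not below `k`. -/
def freeEdges (D : F → Finset W) (c : F → ℕ) (k : ℕ) (v : W) : Finset F :=
  {e ∈ edgesAt D v | k ≤ c e}

lemma card_missingColors_lt_card_freeEdges {c : F → ℕ} {v : W}
    (hc : Set.InjOn c {e | e ∈ edgesAt D v ∧ c e < k}) (hdeg : k < #(edgesAt D v)) :
    #(missingColors D c k v) < #(freeEdges D c k v) := by
  set colored := {e ∈ edgesAt D v | c e < k}
  have hsplit : #colored + #(freeEdges D c k v) = #(edgesAt D v) := by
    simpa only [colored, freeEdges, not_lt] using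
      card_filter_add_card_filter_not (s := edgesAt D v) (c · < k)
  have himage : #(colored.image c) = #colored :=
    card_image_of_injOn (by simpa [colored, Set.InjOn] using hc)
  have hmissing : missingColors D c k v = range k \ colored.image c := by
    ext i
    simp only [missingColors, colored, mem_sdiff, mem_range, mem_image, mem_filter]
    grind
  have hsub : colored.image c ⊆ range k := by
    simp only [colored, image_subset_iff, mem_filter, mem_range]
    exact fun e he ↦ he.2
  have hle := card_le_card hsub
  rw [card_range] at hle
  rw [hmissing, card_sdiff_of_subset hsub, card_range]
  omega

lemma two_mul_card_missingColors_le_sum (hD : ∀ e, #(D e) ≤ 2) {c : F → ℕ} {v : W}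
    (hc : Set.InjOn c {e | e ∈ edgesAt D v ∧ c e < k}) (hdeg : k < #(edgesAt D v))
    (hfree : #{e ∈ freeEdges D c k v | #(D e) = 2} ≤ 2) :
    2 * #(missingColors D c k v) ≤ ∑ e ∈ freeEdges D c k v, (3 - #(D e)) := by
  have hlt := card_missingColors_lt_card_freeEdges hc hdeg
  have hweight : ∑ e ∈ freeEdges D c k v, (3 - #(D e)) + #{e ∈ freeEdges D c k v | #(D e) = 2} =
      2 * #(freeEdges D c k v) := by
    rw [card_filter, ← sum_add_distrib, mul_comm, ← smul_eq_mul, ← sum_const]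
    refine sum_congr rfl fun e he ↦ ?_
    have hpos : 0 < #(D e) := card_pos.2 ⟨v, mem_edgesAt.1 (mem_filter.1 he).1⟩
    have hle := hD e
    split_ifs <;> omega
  omega

/-- A free edge can be recolored for one of its vertices: it is worth `2` units to its only vertex
if it is a singleton, and `1` unit to each of its two vertices otherwise. -/
lemma exists_cover_coloring_of_partial [Finite W] (hD : ∀ e, #(D e) ≤ 2) (c : F → ℕ)
    (hc : ∀ v, Set.InjOn c {e | e ∈ edgesAt D v ∧ c e < k}) (hdeg : ∀ v, k < #(edgesAt D v))
    (hfree : ∀ v, #{e ∈ freeEdges D c k v | #(D e) = 2} ≤ 2) :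
    ∃ g : F → ℕ, ∀ v, ∀ i < k, ∃ e ∈ edgesAt D v, g e = i := by
  classical
  cases nonempty_fintype W
  have hcapacity (e : F) : ∑ v with e ∈ freeEdges D c k v, (3 - #(D e)) ≤ 2 := by
    have hsub : ({v | e ∈ freeEdges D c k v} : Finset W) ⊆ D e := fun v hv ↦ by
      simp only [freeEdges, mem_filter, mem_edgesAt, mem_univ, true_and] at hv
      exact hv.1
    rw [sum_const, smul_eq_mul]
    refine (Nat.mul_le_mul_right _ (card_le_card hsub)).trans ?_
    have := hD e
    interval_cases #(D e) <;> simp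
  obtain ⟨φ, hφ, hφ_mem⟩ := exists_injective_of_weight (missingColors D c k) (freeEdges D c k)
    (fun _ e ↦ 3 - #(D e)) two_pos
    (fun v ↦ two_mul_card_missingColors_le_sum hD (hc v) (hdeg v) (hfree v)) hcapacity
  have hφ_free (p) : φ p ∈ edgesAt D p.1 ∧ k ≤ c (φ p) := mem_filter.1 (hφ_mem p)
  refine ⟨Function.extend φ (fun p ↦ (p.2 : ℕ)) c, fun v i hi ↦ ?_⟩
  by_cases hmissing : i ∈ missingColors D c k v
  · exact ⟨φ ⟨v, i, hmissing⟩, (hφ_free _).1, hφ.extend_apply _ _ _⟩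
  · obtain ⟨e, he, rfl⟩ : ∃ e ∈ edgesAt D v, c e = i := by
      simpa [missingColors, hi] using hmissing
    refine ⟨e, he, Function.extend_apply' _ _ _ ?_⟩
    rintro ⟨p, rfl⟩
    exact hi.not_ge (hφ_free p).2

end Hypergraph

/-- The Goldberg–Seymour conjecture. -/
def GoldbergSeymour : Prop :=
  ∀ (W F : Type) [Fintype W] [DecidableEq W] [Fintype F] (ends : F → Sym2 W), Loopless ends →
    (chromaticIndex ends : ℤ) ≤ max ((maxDegree ends : ℤ) + 1) ⌈density ends⌉

lemma exists_isProperEdgeColoring_of_chromaticIndex_le {W F : Type} [Finite F] {ends : F → Sym2 W}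
    {n : ℕ} (h : chromaticIndex ends ≤ n) : ∃ c : F → Fin n, IsProperEdgeColoring ends c := by
  obtain ⟨m, ⟨f⟩⟩ := Finite.exists_equiv_fin F
  have hne : {j : ℕ | ∃ c : F → Fin j, IsProperEdgeColoring ends c}.Nonempty :=
    ⟨m, f, fun _ _ _ _ _ hef ↦ f.injective hef⟩
  obtain ⟨c, hc⟩ := Nat.sInf_mem hne
  exact ⟨fun e ↦ Fin.castLE h (c e), fun v e f he hf hef ↦
    hc v e f he hf (Fin.castLE_injective h hef)⟩

section PairEdges

variable {W F : Type} {D : F → Finset W} {ends : {e // #(D e) = 2} → Sym2 W} {k : ℕ}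

/-- `ends` is the multigraph formed by the edges of size two of the hypergraph `D`. -/
def IsPairGraph (D : F → Finset W) (ends : {e // #(D e) = 2} → Sym2 W) : Prop :=
  ∀ e v, v ∈ ends e ↔ v ∈ D e

lemma exists_isPairGraph (D : F → Finset W) :
    ∃ ends : {e // #(D e) = 2} → Sym2 W, IsPairGraph D ends ∧ Loopless ends := by
  classical
  have hpair (e : {e // #(D e) = 2}) : ∃ s : Sym2 W, (∀ v, v ∈ s ↔ v ∈ D e) ∧ ¬ s.IsDiag := by
    obtain ⟨x, y, hxy, he⟩ := card_eq_two.1 e.2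
    exact ⟨s(x, y), fun v ↦ by simp [he], by simpa using hxy⟩
  choose ends hmem hloop using hpair
  exact ⟨ends, hmem, hloop⟩

variable [DecidableEq W] [Fintype F]

lemma IsPairGraph.mDegree_le (h : IsPairGraph D ends) (v : W) :
    mDegree ends v ≤ #(edgesAt D v) :=
  card_le_card_of_injOn Subtype.val (fun e he ↦ by simpa [h e v] using he)
    Subtype.val_injective.injOn

lemma IsPairGraph.maxDegree_le (h : IsPairGraph D ends) (hdeg : ∀ v, #(edgesAt D v) ≤ k) :
    maxDegree ends ≤ k := by
  refine csSup_le' ?_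
  rintro _ ⟨v, rfl⟩
  exact (h.mDegree_le v).trans (hdeg v)

lemma IsPairGraph.card_edgesMeeting_add_card_edgesIn_le [Fintype W] (h : IsPairGraph D ends)
    (U : Finset W) :
    #(edgesMeeting D U) + #(edgesIn ends U) ≤ ∑ v ∈ U, #(edgesAt D v) := by
  have hin : #(edgesIn ends U) ≤ #{e | #(D e ∩ U) = 2} := by
    refine card_le_card_of_injOn Subtype.val (fun e he ↦ ?_) Subtype.val_injective.injOn
    have hsub : D e ⊆ U := fun v hv ↦ (mem_filter.1 he).2 v ((h e v).2 hv)
    simpa [inter_eq_left.2 hsub] using e.2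
  refine (Nat.add_le_add_left hin _).trans ?_
  rw [sum_card_edgesAt, edgesMeeting, card_filter, card_filter, ← sum_add_distrib]
  refine sum_le_sum fun e _ ↦ ?_
  have hpos : (∃ v ∈ D e, v ∈ U) → 0 < #(D e ∩ U) := fun ⟨v, hvD, hvU⟩ ↦
    card_pos.2 ⟨v, mem_inter.2 ⟨hvD, hvU⟩⟩
  split_ifs <;> grind

lemma IsPairGraph.density_le [Fintype W] (h : IsPairGraph D ends) (hD : IsCodense D k)
    (hdeg : ∀ v, #(edgesAt D v) ≤ k + 1) : density ends ≤ k + 2 := by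
  refine Real.sSup_le ?_ (by positivity)
  rintro _ ⟨U, ⟨hU, m, hm⟩, rfl⟩
  have hm_pos : (0 : ℝ) < 2 * m := by
    have : 0 < m := by omega
    positivity
  have hsum : ∑ v ∈ U, #(edgesAt D v) ≤ #U * (k + 1) := sum_le_card_nsmul _ _ _ fun v _ ↦ hdeg v
  have hle := h.card_edgesMeeting_add_card_edgesIn_le U
  have hdense := hD hm
  have hin : #(edgesIn ends U) ≤ m * (k + 2) := by
    rw [hm] at hsum
    linarith
  have hin_real : (#(edgesIn ends U) : ℝ) ≤ m * (k + 2) := by exact_mod_cast hin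
  have hden : (#U : ℝ) - 1 = 2 * m := by rw [hm]; push_cast; ring
  rw [hden, div_le_iff₀ hm_pos]
  linarith

lemma IsPairGraph.exists_partial_coloring (h : IsPairGraph D ends)
    (hχ : chromaticIndex ends ≤ k + 2) :
    ∃ c : F → ℕ, (∀ v, Set.InjOn c {e | e ∈ edgesAt D v ∧ c e < k}) ∧
      ∀ v, #{e ∈ freeEdges D c k v | #(D e) = 2} ≤ 2 := by
  obtain ⟨c₀, hc₀⟩ := exists_isProperEdgeColoring_of_chromaticIndex_le hχ
  set c : F → ℕ := fun e ↦ if he : #(D e) = 2 then c₀ ⟨e, he⟩ else k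
  have hc_pair {e : F} (he : #(D e) = 2) : c e = c₀ ⟨e, he⟩ := dif_pos he
  have pair_of_lt {e : F} (he : c e < k) : #(D e) = 2 := by
    by_contra hne
    exact he.ne (dif_neg hne)
  have hc_inj (v : W) : Set.InjOn c {e | e ∈ edgesAt D v ∧ #(D e) = 2} := by
    rintro e ⟨hev, he⟩ f ⟨hfv, hf⟩ hef
    rw [hc_pair he, hc_pair hf] at hef
    exact congrArg Subtype.val <| hc₀ v ⟨e, he⟩ ⟨f, hf⟩ ((h _ v).2 (mem_edgesAt.1 hev))
      ((h _ v).2 (mem_edgesAt.1 hfv)) (Fin.ext hef)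
  refine ⟨c, fun v ↦ (hc_inj v).mono ?_, fun v ↦ ?_⟩
  · rintro e ⟨hev, hlt⟩
    exact ⟨hev, pair_of_lt hlt⟩
  calc #{e ∈ freeEdges D c k v | #(D e) = 2} ≤ #(Ico k (k + 2)) := by
        refine card_le_card_of_injOn c (fun e he ↦ ?_) ((hc_inj v).mono fun e he ↦ ?_)
        · simp only [freeEdges, coe_filter, mem_filter, Set.mem_ofPred_eq] at he
          have hlt : c e < k + 2 := hc_pair he.2 ▸ (c₀ ⟨e, he.2⟩).isLt
          exact mem_coe.2 (mem_Ico.2 ⟨he.1.2, hlt⟩)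
        · simp only [freeEdges, coe_filter, mem_filter, Set.mem_ofPred_eq] at he
          exact ⟨he.1.1, he.2⟩
    _ = 2 := by simp

end PairEdges

theorem GoldbergSeymour.exists_cover_coloring_of_isCodense (GS : GoldbergSeymour) {W F : Type}
    [Finite W] [DecidableEq W] [Fintype F] {D : F → Finset W} {k : ℕ}
    (hD : ∀ e, #(D e) ≤ 2) (h : IsCodense D k) :
    ∃ g : F → ℕ, ∀ v, ∀ i < k, ∃ e ∈ edgesAt D v, g e = i := by
  cases nonempty_fintype W
  obtain ⟨D', hsub, hmin⟩ := exists_minimal_le_of_wellFoundedLT (IsCodense · k) D h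
  have hD' (e : F) : #(D' e) ≤ 2 := (card_le_card (hsub e)).trans (hD e)
  have hreg := card_edgesAt_of_minimal_isCodense hD' hmin
  obtain ⟨ends, hends, hloop⟩ := exists_isPairGraph D'
  have hχ : chromaticIndex ends ≤ k + 2 := by
    have hdeg : maxDegree ends ≤ k + 1 := hends.maxDegree_le fun v ↦ (hreg v).le
    have hdens : ⌈density ends⌉ ≤ (k : ℤ) + 2 :=
      Int.ceil_le.2 (by exact_mod_cast hends.density_le hmin.prop fun v ↦ (hreg v).le)
    have := GS _ _ ends hloop
    omega
  obtain ⟨c, hc, hfree⟩ := hends.exists_partial_coloring hχ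
  obtain ⟨g, hg⟩ := exists_cover_coloring_of_partial hD' c hc hmin.prop.lt_card_edgesAt hfree
  refine ⟨g, fun v i hi ↦ ?_⟩
  obtain ⟨e, he, hge⟩ := hg v i hi
  exact ⟨e, mem_edgesAt.2 (hsub e (mem_edgesAt.1 he)), hge⟩

section EndsIn

variable {V E : Type*} [DecidableEq V] {ends : E → Sym2 V} {Z : Finset V}

/-- The hypergraph on `Z` whose edges are the sets of ends in `Z` of the edges of a multigraph.
Edges leaving `Z` become singletons or empty, and loops become singletons. -/
def endsIn (ends : E → Sym2 V) (Z : Finset V) (e : E) : Finset Z :=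
  {z | (z : V) ∈ ends e}

@[simp]
lemma mem_endsIn {e : E} {z : Z} : z ∈ endsIn ends Z e ↔ (z : V) ∈ ends e := by
  simp [endsIn]

lemma card_endsIn_le_two (ends : E → Sym2 V) (Z : Finset V) (e : E) : #(endsIn ends Z e) ≤ 2 := by
  calc #(endsIn ends Z e) ≤ #(ends e).toFinset :=
        card_le_card_of_injOn Subtype.val (fun z hz ↦ by simpa using hz)
          Subtype.val_injective.injOn
    _ ≤ 2 := by rw [Sym2.card_toFinset]; split_ifs <;> simp

end EndsIn

section Multigraph

variable {V E : Type} [DecidableEq V] [Fintype E] {ends : E → Sym2 V} {Z : Finset V}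

lemma card_edgesAt_endsIn (z : Z) : #(edgesAt (endsIn ends Z) z) = mDegree ends z := by
  simp [edgesAt, mDegree]

variable [Fintype V]

lemma edgesMeeting_endsIn (U : Finset Z) :
    edgesMeeting (endsIn ends Z) U = edgesPlus ends (U.map (Function.Embedding.subtype _)) := by
  ext e
  simp [edgesPlus]

lemma isCodense_endsIn {k : ℕ} (hdeg : ∀ z ∈ Z, k + 1 ≤ mDegree ends z)
    (hco : ∀ U ⊆ Z, IsOddSet U → (#U + 1) / 2 * k + 1 ≤ #(edgesPlus ends U)) :
    IsCodense (endsIn ends Z) k := by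
  intro U m hm
  obtain rfl | hm_pos := m.eq_zero_or_pos
  · obtain ⟨z, rfl⟩ := card_eq_one.1 hm
    rw [edgesMeeting_singleton, card_edgesAt_endsIn]
    simpa using hdeg z z.2
  · have hU := hco (U.map (Function.Embedding.subtype _))
      (fun v hv ↦ property_of_mem_map_subtype U hv)
      ⟨by rw [card_map]; omega, m, by rw [card_map, hm]⟩
    rwa [card_map, hm, show (2 * m + 1 + 1) / 2 = m + 1 by omega, ← edgesMeeting_endsIn] at hU

end Multigraph

theorem stmt_2_general (GS : GoldbergSeymour)
    {V E : Type} [Fintype V] [DecidableEq V] [Fintype E] (ends : E → Sym2 V) (Z : Finset V)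
    (k ε : ℕ) (hk : 0 < k) (hε : ε = 0 ∨ ε = 1)
    (hdeg : ∀ z ∈ Z, k + ε ≤ mDegree ends z)
    (hco : ∀ U ⊆ Z, IsOddSet U → (#U + 1) / 2 * k + ε ≤ #(edgesPlus ends U)) :
    ∃ C : Fin (k - 1 + ε) → Finset E,
      (∀ i, ∀ z ∈ Z, ∃ e ∈ C i, z ∈ ends e) ∧
      (∀ i j, i ≠ j → Disjoint (C i) (C j)) := by
  have hbound (n : ℕ) (hn : 1 ≤ n) : n * (k - 1 + ε) + 1 ≤ n * k + ε := by
    obtain ⟨j, rfl⟩ := Nat.exists_eq_add_of_lt hk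
    obtain rfl | rfl := hε <;> grind
  have hcodense : IsCodense (endsIn ends Z) (k - 1 + ε) :=
    isCodense_endsIn (fun z hz ↦ le_trans (by omega) (hdeg z hz)) fun U hU hodd ↦
      (hbound _ (by have := hodd.1; omega)).trans (hco U hU hodd)
  obtain ⟨g, hg⟩ := GS.exists_cover_coloring_of_isCodense (card_endsIn_le_two ends Z) hcodense
  refine ⟨fun i ↦ {e | g e = i}, fun i z hz ↦ ?_, fun i j hij ↦ ?_⟩
  · obtain ⟨e, he, hge⟩ := hg ⟨z, hz⟩ i i.isLt
    exact ⟨e, by simpa using hge, by simpa using he⟩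
  · exact disjoint_filter.2 fun e _ hi hj ↦ hij (Fin.ext (hi.symm.trans hj))

/-- Assuming the Goldberg–Seymour conjecture, if every vertex of `Z` has degree
at least `k+1` and `|E⁺(U)| ≥ ((|U|+1)/2)·k + ε` for every odd set `U ⊆ Z`, then `G` contains
`k−1+ε` pairwise disjoint `Z`-covers. -/
theorem stmt_2
    (GS : ∀ (W F : Type) [Fintype W] [DecidableEq W] [Fintype F]
      (ends' : F → Sym2 W), Loopless ends' →
      (chromaticIndex ends' : ℤ) ≤ max ((maxDegree ends' : ℤ) + 1) ⌈density ends'⌉)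
    {V E : Type} [Fintype V] [DecidableEq V] [Fintype E]
    (ends : E → Sym2 V) (hG : Loopless ends)
    (Z : Finset V) (k ε : ℕ) (hk : 0 < k) (hε : ε = 0 ∨ ε = 1)
    (hdeg : ∀ z ∈ Z, k + 1 ≤ mDegree ends z)
    (hco : ∀ U : Finset V, U ⊆ Z → IsOddSet U →
      (U.card + 1) / 2 * k + ε ≤ (edgesPlus ends U).card) :
    ∃ C : Fin (k - 1 + ε) → Finset E,
      (∀ i, ∀ z ∈ Z, ∃ e ∈ C i, z ∈ ends e) ∧
      (∀ i j, i ≠ j → Disjoint (C i) (C j)) :=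
  stmt_2_general GS ends Z k ε hk hε (fun z hz ↦ le_trans (by omega) (hdeg z hz)) hco
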